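/- The transfer matrix is a scalar multiple of the identity at the following special points, and has scalar asymptotics: (i) T(η/2) = T(−η/2) = (−1)^N · 2 cosh η · a(η/2) d(−η/2) · Id; (ii) T(η/2 − iπ/2) = T(−(η/2 − iπ/2)) = −2 cosh η · coth ζ₋ · coth ζ₊ · a(iπ/2 + η/2) d(iπ/2 − η/2) · Id (assume sinh ζ₊ ≠ 0, sinh ζ₋ ≠ 0); (iii) for real λ → ±∞, e^{∓2λ(N+2)} T(λ) converges entrywise to 2^{−(2N+1)} (κ₊κ₋ cosh(τ₊ − τ₋)/(sinh ζ₊ sinh ζ₋)) · Id. -/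

import Mathlib

/-!
By crossing symmetry of the `R`-matrix (`crossing`), `M̂(λ)` is the product of the local matrices
`R_{0n}(λ + ξ_n - η/2)` in the order opposite to that of `M(λ)` (`Mhat_eq`). The transfer matrix is
thus `tr₀ (K₊ R_{0N} ⋯ R_{01} K₋ R̂_{01} ⋯ R̂_{0N})`, which collapses to a scalar in two ways.

* Inner collapse (`Tgen_inner`): if `R_{0n} K₋ R̂_{0n} = c_n K₋` for every `n`, the sites are removed
  starting from the middle, and `T = (∏ c_n) tr (K₊ K₋)`.
* Outer collapse (`Tgen_outer`): if tracing one site against `K₊` reproduces `c_n K₊`, the sites are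
  removed starting from the outside, with the same result.

At `η/2` and `η/2 - iπ/2` the matrix `K₋` is proportional to `1`, respectively `σᶻ`, and the inner
collapse is unitarity of `R`, possibly twisted by `σᶻ`. At the opposite points the same happens for
`K₊`, and the outer collapse is crossing unitarity. For `λ → ±∞`, each factor converges after
rescaling: `R` to a diagonal matrix and `K±` to off-diagonal ones. For these limits the inner
collapse holds with `c_n = 1/4`.
-/

open Complex Finset

noncomputable section

namespace XXZ

/-- `a(λ) = ∏ₙ sinh(λ - ξₙ + η/2)` -/
def aF (N : ℕ) (η : ℂ) (ξ : Fin N → ℂ) (z : ℂ) : ℂ :=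
  ∏ n : Fin N, Complex.sinh (z - ξ n + η / 2)

/-- `d(λ) = a(λ - η)` -/
def dF (N : ℕ) (η : ℂ) (ξ : Fin N → ℂ) (z : ℂ) : ℂ := aF N η ξ (z - η)
/-- the index type of the quantum space `(ℂ²)^{⊗N}` together with the auxiliary space -/
abbrev FullIdx (N : ℕ) := Fin 2 × (Fin N → Fin 2)

/-- the trigonometric 6-vertex `R`-matrix -/
def Rmat (η : ℂ) (z : ℂ) : Matrix (Fin 2 × Fin 2) (Fin 2 × Fin 2) ℂ :=
  fun p q =>
    if p = q then (if p.1 = p.2 then Complex.sinh (z + η) else Complex.sinh z)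
    else if p.1 = q.2 ∧ p.2 = q.1 then Complex.sinh η else 0

/-- the Pauli matrix `σʸ` -/
def sigmaY : Matrix (Fin 2) (Fin 2) ℂ := !![0, -Complex.I; Complex.I, 0]

/-- the Pauli matrix `σᶻ` -/
def sigmaZ : Matrix (Fin 2) (Fin 2) ℂ := !![1, 0; 0, -1]

/-- a `2×2` matrix acting on the auxiliary space (factor `0`) -/
def auxOp (N : ℕ) (K : Matrix (Fin 2) (Fin 2) ℂ) :
    Matrix (FullIdx N) (FullIdx N) ℂ :=
  fun p q => K p.1 q.1 * (if p.2 = q.2 then 1 else 0)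

/-- `R_{0n}(z)`: the `R`-matrix acting on the auxiliary space and the `n`-th site -/
def R0n (N : ℕ) (η : ℂ) (n : Fin N) (z : ℂ) :
    Matrix (FullIdx N) (FullIdx N) ℂ :=
  fun p q =>
    Rmat η z (p.1, p.2 n) (q.1, q.2 n) *
      (if ∀ m : Fin N, m ≠ n → p.2 m = q.2 m then 1 else 0)

/-- the bulk monodromy matrix `M(λ) = R_{0N}(λ-ξ_N-η/2) ⋯ R_{01}(λ-ξ_1-η/2)` -/
def Mmono (N : ℕ) (η : ℂ) (ξ : Fin N → ℂ) (z : ℂ) :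
    Matrix (FullIdx N) (FullIdx N) ℂ :=
  (List.ofFn fun k : Fin N => R0n N η k.rev (z - ξ k.rev - η / 2)).prod

/-- partial transposition in the auxiliary space (factor `0`) -/
def pt0 (N : ℕ) (A : Matrix (FullIdx N) (FullIdx N) ℂ) :
    Matrix (FullIdx N) (FullIdx N) ℂ :=
  fun p q => A (q.1, p.2) (p.1, q.2)

/-- `M̂(λ) = (-1)^N σ⁰ʸ M(-λ)^{t₀} σ⁰ʸ` -/
def Mhat (N : ℕ) (η : ℂ) (ξ : Fin N → ℂ) (z : ℂ) :
    Matrix (FullIdx N) (FullIdx N) ℂ :=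
  ((-1 : ℂ) ^ N) • (auxOp N sigmaY * pt0 N (Mmono N η ξ (-z)) * auxOp N sigmaY)

/-- the general scalar solution `K(λ; ζ, κ, τ)` of the reflection equation -/
def Kmat (η : ℂ) (z ζ κ τ : ℂ) : Matrix (Fin 2) (Fin 2) ℂ :=
  (1 / Complex.sinh ζ) •
    !![Complex.sinh (z - η / 2 + ζ), κ * Complex.exp τ * Complex.sinh (2 * z - η);
      κ * Complex.exp (-τ) * Complex.sinh (2 * z - η), Complex.sinh (ζ - z + η / 2)]

/-- `K₋(λ) = K(λ; ζ₋, κ₋, τ₋)` -/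
def Kminus (η ζm κm τm : ℂ) (z : ℂ) : Matrix (Fin 2) (Fin 2) ℂ := Kmat η z ζm κm τm

/-- `K₊(λ) = K(λ+η; ζ₊, κ₊, τ₊)` -/
def Kplus (η ζp κp τp : ℂ) (z : ℂ) : Matrix (Fin 2) (Fin 2) ℂ := Kmat η (z + η) ζp κp τp

/-- partial trace over the auxiliary space -/
def tr0 (N : ℕ) (A : Matrix (FullIdx N) (FullIdx N) ℂ) :
    Matrix (Fin N → Fin 2) (Fin N → Fin 2) ℂ :=
  fun s t => ∑ i : Fin 2, A (i, s) (i, t)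

/-- the transfer matrix `T(λ) = tr₀{K₊(λ) M(λ) K₋(λ) M̂(λ)}` -/
def Tmat (N : ℕ) (η : ℂ) (ξ : Fin N → ℂ) (ζp ζm κp κm τp τm : ℂ) (z : ℂ) :
    Matrix (Fin N → Fin 2) (Fin N → Fin 2) ℂ :=
  tr0 N (auxOp N (Kplus η ζp κp τp z) * Mmono N η ξ z *
    auxOp N (Kminus η ζm κm τm z) * Mhat N η ξ z)

/-! ### Blocks in the auxiliary space -/

/-- The `(i, j)` block of an operator on the full space: an operator on the quantum space. -/
def blk {N : ℕ} (A : Matrix (FullIdx N) (FullIdx N) ℂ) (i j : Fin 2) :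
    Matrix (Fin N → Fin 2) (Fin N → Fin 2) ℂ :=
  fun s t => A (i, s) (j, t)

lemma blk_ext {N : ℕ} {A B : Matrix (FullIdx N) (FullIdx N) ℂ}
    (h : ∀ i j, blk A i j = blk B i j) : A = B := by
  ext ⟨i, s⟩ ⟨j, t⟩
  exact congrFun (congrFun (h i j) s) t

lemma blk_mul {N : ℕ} (A B : Matrix (FullIdx N) (FullIdx N) ℂ) (i j : Fin 2) :
    blk (A * B) i j = blk A i 0 * blk B 0 j + blk A i 1 * blk B 1 j := by
  ext s t
  simp [blk, Matrix.mul_apply, Fintype.sum_prod_type]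

lemma blk_smul {N : ℕ} (c : ℂ) (A : Matrix (FullIdx N) (FullIdx N) ℂ) (i j : Fin 2) :
    blk (c • A) i j = c • blk A i j := rfl

lemma blk_auxOp {N : ℕ} (K : Matrix (Fin 2) (Fin 2) ℂ) (i j : Fin 2) :
    blk (auxOp N K) i j = K i j • (1 : Matrix (Fin N → Fin 2) (Fin N → Fin 2) ℂ) := by
  ext s t
  simp [blk, auxOp, Matrix.one_apply]

lemma blk_pt0 {N : ℕ} (A : Matrix (FullIdx N) (FullIdx N) ℂ) (i j : Fin 2) :
    blk (pt0 N A) i j = blk A j i := rfl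

lemma tr0_eq {N : ℕ} (A : Matrix (FullIdx N) (FullIdx N) ℂ) :
    tr0 N A = blk A 0 0 + blk A 1 1 := by
  ext s t
  simp [tr0, blk, Fin.sum_univ_two]

lemma tr0_smul {N : ℕ} (c : ℂ) (A : Matrix (FullIdx N) (FullIdx N) ℂ) :
    tr0 N (c • A) = c • tr0 N A := by
  simp [tr0_eq, blk_smul]

lemma tr0_auxOp_mul_auxOp {N : ℕ} (K K' : Matrix (Fin 2) (Fin 2) ℂ) :
    tr0 N (auxOp N K * auxOp N K') =
      (K * K').trace • (1 : Matrix (Fin N → Fin 2) (Fin N → Fin 2) ℂ) := by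
  simp only [tr0_eq, blk_mul, blk_auxOp, Matrix.trace_fin_two, Matrix.mul_apply,
    Fin.sum_univ_two, mul_smul_comm, mul_one]
  module

/-- Every block of `A` commutes with every block of `B`, as happens when `A` and `B` act on
disjoint sets of sites. -/
def BlkComm {N : ℕ} (A B : Matrix (FullIdx N) (FullIdx N) ℂ) : Prop :=
  ∀ i j k l, Commute (blk A i j) (blk B k l)

lemma BlkComm.mul_right {N : ℕ} {A B C : Matrix (FullIdx N) (FullIdx N) ℂ}
    (hB : BlkComm A B) (hC : BlkComm A C) : BlkComm A (B * C) := by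
  intro i j k l
  rw [blk_mul]
  exact ((hB _ _ _ _).mul_right (hC _ _ _ _)).add_right ((hB _ _ _ _).mul_right (hC _ _ _ _))

lemma blkComm_auxOp {N : ℕ} (A : Matrix (FullIdx N) (FullIdx N) ℂ)
    (K : Matrix (Fin 2) (Fin 2) ℂ) : BlkComm A (auxOp N K) := by
  intro i j k l
  rw [blk_auxOp]
  exact (Commute.one_right _).smul_right _

lemma auxOp_one {N : ℕ} : auxOp N 1 = 1 := by
  ext ⟨i, s⟩ ⟨j, t⟩
  by_cases h : i = j <;> by_cases h' : s = t <;> simp [auxOp, Matrix.one_apply, h, h']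

lemma BlkComm.list_prod {N : ℕ} {A : Matrix (FullIdx N) (FullIdx N) ℂ}
    (L : List (Matrix (FullIdx N) (FullIdx N) ℂ)) (h : ∀ B ∈ L, BlkComm A B) :
    BlkComm A L.prod := by
  induction L with
  | nil => simpa [auxOp_one] using blkComm_auxOp A 1
  | cons B L ih =>
    rw [List.prod_cons]
    exact (h B (by simp)).mul_right (ih fun C hC => h C (by simp [hC]))

/-- Partial transposition reverses products only because the blocks commute. -/
lemma pt0_mul {N : ℕ} {A B : Matrix (FullIdx N) (FullIdx N) ℂ} (h : BlkComm A B) :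
    pt0 N (A * B) = pt0 N B * pt0 N A := by
  apply blk_ext
  intro i j
  simp only [blk_pt0, blk_mul]
  rw [(h j 0 0 i).eq, (h j 1 1 i).eq]

/-! ### Operators acting on one site -/

/-- `E` acting on the `n`-th site of the quantum space. -/
def siteOp {N : ℕ} (n : Fin N) (E : Matrix (Fin 2) (Fin 2) ℂ) :
    Matrix (Fin N → Fin 2) (Fin N → Fin 2) ℂ :=
  fun s t => E (s n) (t n) * (if ∀ m : Fin N, m ≠ n → s m = t m then 1 else 0)

lemma siteOp_one {N : ℕ} (n : Fin N) : siteOp n 1 = 1 := by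
  ext s t
  by_cases h : s = t
  · subst h
    simp [siteOp]
  · rw [Matrix.one_apply_ne h, siteOp]
    by_cases h1 : s n = t n
    · rw [if_neg, mul_zero]
      intro h2
      apply h
      ext m
      by_cases hm : m = n
      · rw [hm, h1]
      · rw [h2 m hm]
    · simp [h1]

lemma siteOp_add {N : ℕ} (n : Fin N) (E F : Matrix (Fin 2) (Fin 2) ℂ) :
    siteOp n (E + F) = siteOp n E + siteOp n F := by
  ext s t
  simp only [siteOp, Matrix.add_apply, add_mul]

lemma siteOp_smul {N : ℕ} (n : Fin N) (c : ℂ) (E : Matrix (Fin 2) (Fin 2) ℂ) :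
    siteOp n (c • E) = c • siteOp n E := by
  ext s t
  simp [siteOp]

lemma siteOp_mul {N : ℕ} (n : Fin N) (E F : Matrix (Fin 2) (Fin 2) ℂ) :
    siteOp n (E * F) = siteOp n E * siteOp n F := by
  ext s t
  rw [Matrix.mul_apply]
  -- only the configurations that differ from `s` at most at the site `n` contribute
  rw [← Finset.sum_subset (Finset.subset_univ
    (Finset.univ.image fun a : Fin 2 => Function.update s n a))]
  · rw [Finset.sum_image]
    · simp only [siteOp, Matrix.mul_apply, Finset.sum_mul]
      apply Finset.sum_congr rfl
      intro a _
      have h1 : ∀ m : Fin N, m ≠ n → s m = Function.update s n a m := by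
        intro m hm
        simp [hm]
      have h2 : (∀ m : Fin N, m ≠ n → Function.update s n a m = t m) ↔
          ∀ m : Fin N, m ≠ n → s m = t m := by
        constructor <;> intro h m hm <;> have := h m hm <;> simpa [hm] using this
      rw [if_pos h1]
      simp only [h2, Function.update_self]
      ring
    · intro a _ b _ hab
      simpa using congrFun hab n
  · intro u _ hu
    have : ¬ ∀ m : Fin N, m ≠ n → s m = u m := by
      intro h
      apply hu
      rw [Finset.mem_image]
      refine ⟨u n, Finset.mem_univ _, ?_⟩
      ext m
      by_cases hm : m = n
      · subst hm
        simp
      · simp [hm, h m hm]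
    rw [siteOp, if_neg this]
    simp

lemma siteOp_mul_apply {N : ℕ} {n m : Fin N} (hnm : n ≠ m) (E F : Matrix (Fin 2) (Fin 2) ℂ)
    (s t : Fin N → Fin 2) :
    (siteOp n E * siteOp m F) s t = E (s n) (t n) * F (s m) (t m) *
      (if ∀ k : Fin N, k ≠ n → k ≠ m → s k = t k then 1 else 0) := by
  rw [Matrix.mul_apply, Finset.sum_eq_single (Function.update s n (t n))]
  · have h1 : ∀ k : Fin N, k ≠ n → s k = Function.update s n (t n) k := by
      intro k hk
      simp [hk]
    have h2 : (∀ k : Fin N, k ≠ m → Function.update s n (t n) k = t k) ↔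
        ∀ k : Fin N, k ≠ n → k ≠ m → s k = t k := by
      constructor
      · intro h k hk hk'
        simpa [hk] using h k hk'
      · intro h k hk
        by_cases hkn : k = n
        · subst hkn
          simp
        · simpa [hkn] using h k hkn hk
    simp only [siteOp, if_pos h1, h2, Function.update_self, Function.update_of_ne hnm.symm]
    ring
  · intro u _ hu
    by_cases h1 : ∀ k : Fin N, k ≠ n → s k = u k
    · by_cases h2 : ∀ k : Fin N, k ≠ m → u k = t k
      · exfalso
        apply hu
        ext k
        by_cases hk : k = n
        · subst hk
          simp [h2 k hnm]
        · simp [hk, h1 k hk]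
      · simp only [siteOp, if_neg h2, mul_zero]
    · simp only [siteOp, if_neg h1, mul_zero, zero_mul]
  · intro h
    exact absurd (Finset.mem_univ _) h

lemma siteOp_commute {N : ℕ} {n m : Fin N} (hnm : n ≠ m) (E F : Matrix (Fin 2) (Fin 2) ℂ) :
    Commute (siteOp n E) (siteOp m F) := by
  ext s t
  rw [siteOp_mul_apply hnm, siteOp_mul_apply hnm.symm, mul_comm (E _ _)]
  congr 2
  apply propext
  constructor <;> exact fun h k h1 h2 => h k h2 h1

/-- A `4 × 4` matrix acting on the auxiliary space and on the `n`-th site. -/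
def emb {N : ℕ} (n : Fin N) (r : Matrix (Fin 2 × Fin 2) (Fin 2 × Fin 2) ℂ) :
    Matrix (FullIdx N) (FullIdx N) ℂ :=
  fun p q => r (p.1, p.2 n) (q.1, q.2 n) *
    (if ∀ m : Fin N, m ≠ n → p.2 m = q.2 m then 1 else 0)

/-- The `2 × 2` blocks of a `4 × 4` matrix, with respect to the first tensor factor. -/
def rb (r : Matrix (Fin 2 × Fin 2) (Fin 2 × Fin 2) ℂ) (i j : Fin 2) :
    Matrix (Fin 2) (Fin 2) ℂ := fun a b => r (i, a) (j, b)

lemma blk_emb {N : ℕ} (n : Fin N) (r : Matrix (Fin 2 × Fin 2) (Fin 2 × Fin 2) ℂ)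
    (i j : Fin 2) : blk (emb n r) i j = siteOp n (rb r i j) := rfl

lemma emb_smul {N : ℕ} (n : Fin N) (c : ℂ) (r : Matrix (Fin 2 × Fin 2) (Fin 2 × Fin 2) ℂ) :
    emb n (c • r) = c • emb n r := by
  ext p q
  simp [emb]

lemma emb_blkComm {N : ℕ} {n m : Fin N} (hnm : n ≠ m)
    (r r' : Matrix (Fin 2 × Fin 2) (Fin 2 × Fin 2) ℂ) : BlkComm (emb n r) (emb m r') := by
  intro i j k l
  rw [blk_emb, blk_emb]
  exact siteOp_commute hnm _ _

/-- `r · (K ⊗ 1) · r' = c (K ⊗ 1)`, written blockwise: dressing `K` from inside by one site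
gives back `K` up to a scalar. -/
def Inner (r : Matrix (Fin 2 × Fin 2) (Fin 2 × Fin 2) ℂ) (K : Matrix (Fin 2) (Fin 2) ℂ)
    (r' : Matrix (Fin 2 × Fin 2) (Fin 2 × Fin 2) ℂ) (c : ℂ) : Prop :=
  ∀ i l, K 0 0 • (rb r i 0 * rb r' 0 l) + K 0 1 • (rb r i 0 * rb r' 1 l) +
      K 1 0 • (rb r i 1 * rb r' 0 l) + K 1 1 • (rb r i 1 * rb r' 1 l) =
    (c * K i l) • (1 : Matrix (Fin 2) (Fin 2) ℂ)

/-- `tr₀ ((K ⊗ 1) · r · (X ⊗ 1) · r') = c tr (K X)` for all `X`, written blockwise: `K` is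
reproduced up to a scalar when the outermost site is traced against it. -/
def Outer (r : Matrix (Fin 2 × Fin 2) (Fin 2 × Fin 2) ℂ) (K : Matrix (Fin 2) (Fin 2) ℂ)
    (r' : Matrix (Fin 2 × Fin 2) (Fin 2 × Fin 2) ℂ) (c : ℂ) : Prop :=
  ∀ j k, K 0 0 • (rb r 0 j * rb r' k 0) + K 0 1 • (rb r 1 j * rb r' k 0) +
      K 1 0 • (rb r 0 j * rb r' k 1) + K 1 1 • (rb r 1 j * rb r' k 1) =
    (c * K k j) • (1 : Matrix (Fin 2) (Fin 2) ℂ)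

lemma Inner.emb {N : ℕ} {r r' : Matrix (Fin 2 × Fin 2) (Fin 2 × Fin 2) ℂ}
    {K : Matrix (Fin 2) (Fin 2) ℂ} {c : ℂ} (h : Inner r K r' c) (n : Fin N) :
    emb n r * auxOp N K * emb n r' = c • auxOp N K := by
  apply blk_ext
  intro i l
  have h1 := congrArg (siteOp n) (h i l)
  simp only [siteOp_add, siteOp_smul, siteOp_mul, siteOp_one] at h1
  rw [blk_smul, blk_auxOp, smul_smul, ← h1]
  simp only [blk_mul, blk_auxOp, blk_emb, mul_smul_comm, smul_mul_assoc, mul_one, add_mul]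
  abel

lemma Outer.emb {N : ℕ} {r r' : Matrix (Fin 2 × Fin 2) (Fin 2 × Fin 2) ℂ}
    {K : Matrix (Fin 2) (Fin 2) ℂ} {c : ℂ} (h : Outer r K r' c) (n : Fin N)
    {X : Matrix (FullIdx N) (FullIdx N) ℂ} (hX : BlkComm (emb n r') X) :
    tr0 N (auxOp N K * emb n r * X * emb n r') = c • tr0 N (auxOp N K * X) := by
  have h1 : ∀ j k, _ := fun j k => congrArg (siteOp n) (h j k)
  simp only [siteOp_add, siteOp_smul, siteOp_mul, siteOp_one] at h1
  have h2 : ∀ j k, _ := fun j k => congrArg (· * blk X j k) (h1 j k)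
  simp only [add_mul, smul_mul_assoc, one_mul] at h2
  have h3 : ∀ i j k l (Z : Matrix (Fin N → Fin 2) (Fin N → Fin 2) ℂ),
      Z * blk X k l * siteOp n (rb r' i j) = Z * siteOp n (rb r' i j) * blk X k l := by
    intro i j k l Z
    rw [mul_assoc, mul_assoc, ← blk_emb, (hX i j k l).eq]
  simp only [tr0_eq, blk_mul, blk_auxOp, blk_emb, smul_mul_assoc, one_mul,
    add_mul, h3, smul_add]
  simp only [smul_smul]
  have e00 := h2 0 0
  have e01 := h2 0 1
  have e10 := h2 1 0
  have e11 := h2 1 1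
  linear_combination (norm := module) e00 + e01 + e10 + e11

/-! ### Products over all sites -/

lemma inner_list {N : ℕ} (L : List (Fin N))
    {r r' : Fin N → Matrix (Fin 2 × Fin 2) (Fin 2 × Fin 2) ℂ}
    {K : Matrix (Fin 2) (Fin 2) ℂ} {c : Fin N → ℂ} (h : ∀ k, Inner (r k) K (r' k) (c k)) :
    (L.map fun k => emb k (r k)).prod * auxOp N K * (L.reverse.map fun k => emb k (r' k)).prod =
      (L.map c).prod • auxOp N K := by
  induction L with
  | nil => simp
  | cons k L ih =>
    simp only [List.map_cons, List.prod_cons, List.reverse_cons, List.map_append,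
      List.prod_append, List.map_nil, List.prod_nil, mul_one]
    calc _ = emb k (r k) * ((L.map fun k => emb k (r k)).prod * auxOp N K *
          (L.reverse.map fun k => emb k (r' k)).prod) * emb k (r' k) := by
          simp only [mul_assoc]
      _ = _ := by
          rw [ih, mul_smul_comm, smul_mul_assoc, (h k).emb k, smul_smul, mul_comm]

/-- The outermost site is removed first; this needs the rest of the product to commute with the
operators at that site, hence the absence of repetitions in `L`. -/
lemma outer_list {N : ℕ} (L : List (Fin N)) (hL : L.Nodup)
    {r r' : Fin N → Matrix (Fin 2 × Fin 2) (Fin 2 × Fin 2) ℂ}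
    {K K' : Matrix (Fin 2) (Fin 2) ℂ} {c : Fin N → ℂ} (h : ∀ k, Outer (r k) K (r' k) (c k)) :
    tr0 N (auxOp N K * (L.map fun k => emb k (r k)).prod * auxOp N K' *
        (L.reverse.map fun k => emb k (r' k)).prod) =
      (L.map c).prod • tr0 N (auxOp N K * auxOp N K') := by
  induction L with
  | nil => simp
  | cons k L ih =>
    obtain ⟨hk, hL⟩ := List.nodup_cons.1 hL
    simp only [List.map_cons, List.prod_cons, List.reverse_cons, List.map_append,
      List.prod_append, List.map_nil, List.prod_nil, mul_one]
    have hc : ∀ (f : Fin N → Matrix (Fin 2 × Fin 2) (Fin 2 × Fin 2) ℂ) (L' : List (Fin N)),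
        (∀ m ∈ L', m ∈ L) → BlkComm (emb k (r' k)) (L'.map fun k => emb k (f k)).prod := by
      intro f L' hL'
      apply BlkComm.list_prod
      intro B hB
      obtain ⟨m, hm, rfl⟩ := List.mem_map.1 hB
      apply emb_blkComm
      rintro rfl
      exact hk (hL' _ hm)
    have hX : BlkComm (emb k (r' k)) ((L.map fun k => emb k (r k)).prod * auxOp N K' *
        (L.reverse.map fun k => emb k (r' k)).prod) :=
      ((hc r L fun _ h => h).mul_right (blkComm_auxOp _ _)).mul_right
        (hc r' L.reverse fun m hm => by simpa using hm)
    have h1 := (h k).emb k hX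
    rw [← smul_smul, ← ih hL]
    simp only [mul_assoc] at h1 ⊢
    exact h1

/-- The sites in the order in which their `R`-matrices appear in the monodromy matrix. -/
def sites (N : ℕ) : List (Fin N) := List.ofFn Fin.rev

lemma sites_nodup (N : ℕ) : (sites N).Nodup := List.nodup_ofFn.2 Fin.rev_injective

lemma sites_prod {N : ℕ} (c : Fin N → ℂ) : ((sites N).map c).prod = ∏ k, c k := by
  rw [sites, List.map_ofFn, List.prod_ofFn]
  exact Equiv.prod_comp Fin.revPerm c

lemma Mmono_eq {N : ℕ} (η : ℂ) (ξ : Fin N → ℂ) (z : ℂ) :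
    Mmono N η ξ z = ((sites N).map fun k => emb k (Rmat η (z - ξ k - η / 2))).prod := by
  rw [sites, List.map_ofFn]
  rfl

/-- Crossing symmetry of the `R`-matrix. -/
lemma crossing {N : ℕ} (η z : ℂ) (n : Fin N) :
    auxOp N sigmaY * pt0 N (emb n (Rmat η z)) * auxOp N sigmaY =
      (-1 : ℂ) • emb n (Rmat η (-z - η)) := by
  apply blk_ext
  intro i j
  have e1 : sinh (-z - η) = -sinh (z + η) := by rw [← sinh_neg]; ring_nf
  have key : sigmaY i 0 • sigmaY 0 j • rb (Rmat η z) 0 0 +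
      sigmaY i 0 • sigmaY 1 j • rb (Rmat η z) 1 0 +
      sigmaY i 1 • sigmaY 0 j • rb (Rmat η z) 0 1 +
      sigmaY i 1 • sigmaY 1 j • rb (Rmat η z) 1 1 =
      (-1 : ℂ) • rb (Rmat η (-z - η)) i j := by
    ext a b
    fin_cases i <;> fin_cases j <;> fin_cases a <;> fin_cases b <;>
      simp [sigmaY, rb, Rmat, e1, ← mul_assoc]
  have h1 := congrArg (siteOp n) key
  simp only [siteOp_add, siteOp_smul] at h1
  rw [blk_smul, blk_emb, ← h1]
  simp only [blk_mul, blk_auxOp, blk_pt0, blk_emb, mul_smul_comm, smul_mul_assoc, mul_one,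
    one_mul]
  module

lemma auxOp_sigmaY_sq {N : ℕ} : auxOp N sigmaY * auxOp N sigmaY = 1 := by
  rw [← auxOp_one]
  apply blk_ext
  intro i j
  fin_cases i <;> fin_cases j <;>
    simp [blk_mul, blk_auxOp, sigmaY, smul_smul]

lemma crossing_list {N : ℕ} (η : ℂ) (u : Fin N → ℂ) (L : List (Fin N)) (hL : L.Nodup) :
    auxOp N sigmaY * pt0 N (L.map fun k => emb k (Rmat η (u k))).prod * auxOp N sigmaY =
      (-1 : ℂ) ^ L.length • (L.reverse.map fun k => emb k (Rmat η (-u k - η))).prod := by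
  induction L with
  | nil =>
    have : pt0 N 1 = 1 := by
      rw [← auxOp_one]
      apply blk_ext
      intro i j
      simp only [blk_pt0, blk_auxOp, Matrix.one_apply, eq_comm]
    simp [this, auxOp_sigmaY_sq]
  | cons k L ih =>
    obtain ⟨hk, hL⟩ := List.nodup_cons.1 hL
    simp only [List.map_cons, List.prod_cons, List.reverse_cons, List.map_append,
      List.prod_append, List.map_nil, List.prod_nil, mul_one, List.length_cons]
    rw [pt0_mul]
    · calc _ = (auxOp N sigmaY * pt0 N (L.map fun k => emb k (Rmat η (u k))).prod *
              auxOp N sigmaY) *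
            (auxOp N sigmaY * pt0 N (emb k (Rmat η (u k))) * auxOp N sigmaY) := by
            simp only [mul_assoc]
            rw [← mul_assoc (auxOp N sigmaY) (auxOp N sigmaY), auxOp_sigmaY_sq, one_mul]
        _ = _ := by
            rw [ih hL, crossing, smul_mul_assoc, mul_smul_comm, smul_smul, pow_succ]
    · apply BlkComm.list_prod
      intro B hB
      obtain ⟨m, hm, rfl⟩ := List.mem_map.1 hB
      apply emb_blkComm
      rintro rfl
      exact hk hm

lemma Mhat_eq {N : ℕ} (η : ℂ) (ξ : Fin N → ℂ) (z : ℂ) :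
    Mhat N η ξ z =
      ((sites N).reverse.map fun k => emb k (Rmat η (z + ξ k - η / 2))).prod := by
  rw [Mhat, Mmono_eq, crossing_list _ _ _ (sites_nodup N), smul_smul]
  have : (sites N).length = N := by simp [sites]
  rw [this, ← mul_pow]
  simp only [mul_neg, mul_one, neg_neg, one_pow, one_smul]
  congr 3
  ext1 k
  congr 2
  ring

/-- The transfer matrix built from arbitrary boundary matrices `K`, `K'` and arbitrary local
`4 × 4` matrices `r k`, `r' k` in place of the `R`-matrices. -/
def Tgen {N : ℕ} (K K' : Matrix (Fin 2) (Fin 2) ℂ)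
    (r r' : Fin N → Matrix (Fin 2 × Fin 2) (Fin 2 × Fin 2) ℂ) :
    Matrix (Fin N → Fin 2) (Fin N → Fin 2) ℂ :=
  tr0 N (auxOp N K * ((sites N).map fun k => emb k (r k)).prod * auxOp N K' *
    ((sites N).reverse.map fun k => emb k (r' k)).prod)

lemma Tmat_eq {N : ℕ} (η : ℂ) (ξ : Fin N → ℂ) (ζp ζm κp κm τp τm z : ℂ) :
    Tmat N η ξ ζp ζm κp κm τp τm z =
      Tgen (Kplus η ζp κp τp z) (Kminus η ζm κm τm z)
        (fun k => Rmat η (z - ξ k - η / 2)) (fun k => Rmat η (z + ξ k - η / 2)) := by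
  rw [Tmat, Mmono_eq, Mhat_eq]
  rfl

lemma Tgen_inner {N : ℕ} {K K' : Matrix (Fin 2) (Fin 2) ℂ}
    {r r' : Fin N → Matrix (Fin 2 × Fin 2) (Fin 2 × Fin 2) ℂ} {c : Fin N → ℂ}
    (h : ∀ k, Inner (r k) K' (r' k) (c k)) :
    Tgen K K' r r' = ((∏ k, c k) * (K * K').trace) •
      (1 : Matrix (Fin N → Fin 2) (Fin N → Fin 2) ℂ) := by
  rw [Tgen, mul_assoc, mul_assoc, ← mul_assoc (List.prod _), inner_list _ h, mul_smul_comm,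
    tr0_smul, tr0_auxOp_mul_auxOp, sites_prod, smul_smul]

lemma Tgen_outer {N : ℕ} {K K' : Matrix (Fin 2) (Fin 2) ℂ}
    {r r' : Fin N → Matrix (Fin 2 × Fin 2) (Fin 2 × Fin 2) ℂ} {c : Fin N → ℂ}
    (h : ∀ k, Outer (r k) K (r' k) (c k)) :
    Tgen K K' r r' = ((∏ k, c k) * (K * K').trace) •
      (1 : Matrix (Fin N → Fin 2) (Fin N → Fin 2) ℂ) := by
  rw [Tgen, outer_list _ (sites_nodup N) h, tr0_auxOp_mul_auxOp, sites_prod, smul_smul]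

/-! ### Six-vertex matrices -/

/-- The six-vertex matrix with weights `α`, `β`, `γ`. -/
def R6 (α β γ : ℂ) : Matrix (Fin 2 × Fin 2) (Fin 2 × Fin 2) ℂ :=
  fun p q =>
    if p = q then (if p.1 = p.2 then α else β)
    else if p.1 = q.2 ∧ p.2 = q.1 then γ else 0

lemma Rmat_eq (η z : ℂ) : Rmat η z = R6 (sinh (z + η)) (sinh z) (sinh η) := rfl

/-- Unitarity (`ε = 1`), and its variant twisted by `σᶻ` (`ε = -1`). -/
lemma inner_diag {α β γ α' β' ε k c : ℂ} (hε : ε * ε = 1) (h1 : α * α' = c)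
    (h2 : β * β' + ε * γ * γ = c) (h3 : β' = -ε * β) :
    Inner (R6 α β γ) (k • !![1, 0; 0, ε]) (R6 α' β' γ) c := by
  intro i l
  ext a b
  subst h3
  fin_cases i <;> fin_cases l <;> fin_cases a <;> fin_cases b <;>
    simp [rb, R6, Matrix.mul_apply] <;> grind

/-- Crossing unitarity (`ε = 1`), and its variant twisted by `σᶻ` (`ε = -1`); it is
`inner_diag` with the roles of the weights `α` and `β` exchanged. -/
lemma outer_diag {α β γ α' β' ε k c : ℂ} (hε : ε * ε = 1) (h1 : β * β' = c)
    (h2 : α * α' + ε * γ * γ = c) (h3 : α' = -ε * α) :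
    Outer (R6 α β γ) (k • !![1, 0; 0, ε]) (R6 α' β' γ) c := by
  intro i l
  ext a b
  subst h3
  fin_cases i <;> fin_cases l <;> fin_cases a <;> fin_cases b <;>
    simp [rb, R6, Matrix.mul_apply] <;> grind

lemma inner_offdiag {α β α' β' p q c : ℂ} (h1 : α * β' = c) (h2 : β * α' = c) :
    Inner (R6 α β 0) !![0, p; q, 0] (R6 α' β' 0) c := by
  intro i l
  ext a b
  fin_cases i <;> fin_cases l <;> fin_cases a <;> fin_cases b <;>
    simp [rb, R6, Matrix.mul_apply] <;> grind

lemma sinh_add_I (x : ℂ) : sinh (x + Real.pi * I / 2) = I * cosh x := by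
  rw [sinh_add, show (Real.pi * I / 2 : ℂ) = (Real.pi / 2 : ℂ) * I by ring, sinh_mul_I,
    cosh_mul_I, sin_pi_div_two, cos_pi_div_two]
  ring

lemma sinh_sub_I (x : ℂ) : sinh (x - Real.pi * I / 2) = -I * cosh x := by
  rw [sinh_sub, show (Real.pi * I / 2 : ℂ) = (Real.pi / 2 : ℂ) * I by ring, sinh_mul_I,
    cosh_mul_I, sin_pi_div_two, cos_pi_div_two]
  ring

/-! ### The special points -/

/-- The product of the site weights at the points `±η/2`, in terms of the bulk quantum
determinant. -/
lemma prod_sinh {N : ℕ} (η : ℂ) (ξ : Fin N → ℂ) :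
    ∏ k, sinh (η - ξ k) * sinh (η + ξ k) =
      (-1 : ℂ) ^ N * aF N η ξ (η / 2) * dF N η ξ (-(η / 2)) := by
  have hc : ((-1 : ℂ)) ^ N = ∏ _k : Fin N, (-1 : ℂ) := by simp
  rw [hc, aF, dF, aF, ← Finset.prod_mul_distrib, ← Finset.prod_mul_distrib]
  apply Finset.prod_congr rfl
  intro k _
  rw [show η / 2 - ξ k + η / 2 = η - ξ k by ring,
    show -(η / 2) - η - ξ k + η / 2 = -(η + ξ k) by ring, sinh_neg]
  ring

lemma T_half {N : ℕ} (η : ℂ) (ξ : Fin N → ℂ) (ζp ζm κp κm τp τm : ℂ)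
    (hζp : sinh ζp ≠ 0) (hζm : sinh ζm ≠ 0) :
    Tmat N η ξ ζp ζm κp κm τp τm (η / 2) =
      ((-1 : ℂ) ^ N * 2 * cosh η * aF N η ξ (η / 2) * dF N η ξ (-(η / 2))) •
        (1 : Matrix (Fin N → Fin 2) (Fin N → Fin 2) ℂ) := by
  have hK : Kminus η ζm κm τm (η / 2) = (1 : ℂ) • !![1, 0; 0, 1] := by
    have e1 : 2 * (η / 2) - η = 0 := by ring
    ext i j
    fin_cases i <;> fin_cases j <;> simp [Kminus, Kmat, e1, hζm]
  rw [Tmat_eq, hK, Tgen_inner (c := fun k => sinh (η - ξ k) * sinh (η + ξ k))]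
  · congr 1
    rw [prod_sinh]
    simp only [Kplus, Kmat, Matrix.trace_fin_two, Matrix.mul_apply, Fin.sum_univ_two]
    rw [show η / 2 + η - η / 2 + ζp = ζp + η by ring,
      show ζp - (η / 2 + η) + η / 2 = ζp - η by ring, sinh_add ζp, sinh_sub ζp]
    simp
    field_simp
    ring
  · intro k
    rw [show η / 2 - ξ k - η / 2 = -ξ k by ring, show η / 2 + ξ k - η / 2 = ξ k by ring,
      Rmat_eq, Rmat_eq]
    apply inner_diag (by norm_num)
    · ring_nf
    · simp only [sinh_add, sinh_sub, sinh_neg]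
      linear_combination sinh (ξ k) ^ 2 * cosh_sq η - sinh η ^ 2 * cosh_sq (ξ k)
    · rw [sinh_neg]; ring

lemma T_neg_half {N : ℕ} (η : ℂ) (ξ : Fin N → ℂ) (ζp ζm κp κm τp τm : ℂ)
    (hζp : sinh ζp ≠ 0) (hζm : sinh ζm ≠ 0) :
    Tmat N η ξ ζp ζm κp κm τp τm (-(η / 2)) =
      ((-1 : ℂ) ^ N * 2 * cosh η * aF N η ξ (η / 2) * dF N η ξ (-(η / 2))) •
        (1 : Matrix (Fin N → Fin 2) (Fin N → Fin 2) ℂ) := by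
  have hK : Kplus η ζp κp τp (-(η / 2)) = (1 : ℂ) • !![1, 0; 0, 1] := by
    have e1 : 2 * (-(η / 2) + η) - η = 0 := by ring
    have e2 : -(η / 2) + η - η / 2 + ζp = ζp := by ring
    have e3 : ζp - (-(η / 2) + η) + η / 2 = ζp := by ring
    ext i j
    fin_cases i <;> fin_cases j <;> simp [Kplus, Kmat, e1, e2, e3, hζp]
  rw [Tmat_eq, hK, Tgen_outer (c := fun k => sinh (η - ξ k) * sinh (η + ξ k))]
  · congr 1
    rw [prod_sinh]
    simp only [Kminus, Kmat, Matrix.trace_fin_two, Matrix.mul_apply, Fin.sum_univ_two]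
    simp
    rw [show -(η / 2) - η / 2 + ζm = ζm - η by ring,
      show ζm + η / 2 + η / 2 = ζm + η by ring, sinh_add, sinh_sub]
    field_simp
    ring
  · intro k
    rw [Rmat_eq, Rmat_eq, show -(η / 2) - ξ k - η / 2 = -(η + ξ k) by ring,
      show -(η / 2) + ξ k - η / 2 = -(η - ξ k) by ring,
      show -(η + ξ k) + η = -ξ k by ring, show -(η - ξ k) + η = ξ k by ring]
    apply outer_diag (by norm_num)
    · simp only [sinh_neg]; ring
    · simp only [sinh_add, sinh_sub, sinh_neg]
      linear_combination sinh (ξ k) ^ 2 * cosh_sq η - sinh η ^ 2 * cosh_sq (ξ k)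
    · rw [sinh_neg]; ring

/-- The product of the site weights at the points `±(η/2 - iπ/2)`, in terms of the bulk quantum
determinant. -/
lemma prod_cosh {N : ℕ} (η : ℂ) (ξ : Fin N → ℂ) :
    ∏ k, -(cosh (η - ξ k) * cosh (η + ξ k)) =
      aF N η ξ (Real.pi * I / 2 + η / 2) * dF N η ξ (Real.pi * I / 2 - η / 2) := by
  rw [aF, dF, aF, ← Finset.prod_mul_distrib]
  apply Finset.prod_congr rfl
  intro k _
  rw [show Real.pi * I / 2 + η / 2 - ξ k + η / 2 = (η - ξ k) + Real.pi * I / 2 by ring,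
    show Real.pi * I / 2 - η / 2 - η - ξ k + η / 2 = -(η + ξ k) + Real.pi * I / 2 by ring,
    sinh_add_I, sinh_add_I, cosh_neg]
  linear_combination (-cosh (η - ξ k) * cosh (η + ξ k)) * I_mul_I

lemma T_half_pi {N : ℕ} (η : ℂ) (ξ : Fin N → ℂ) (ζp ζm κp κm τp τm : ℂ)
    (hζp : sinh ζp ≠ 0) (hζm : sinh ζm ≠ 0) :
    Tmat N η ξ ζp ζm κp κm τp τm (η / 2 - Real.pi * I / 2) =
      (-2 * cosh η * (cosh ζm / sinh ζm) * (cosh ζp / sinh ζp) *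
        aF N η ξ (Real.pi * I / 2 + η / 2) * dF N η ξ (Real.pi * I / 2 - η / 2)) •
        (1 : Matrix (Fin N → Fin 2) (Fin N → Fin 2) ℂ) := by
  have hK : Kminus η ζm κm τm (η / 2 - Real.pi * I / 2) =
      (-I * (cosh ζm / sinh ζm)) • !![1, 0; 0, -1] := by
    have e1 : 2 * (η / 2 - Real.pi * I / 2) - η = -(Real.pi * I) := by ring
    have e2 : η / 2 - Real.pi * I / 2 - η / 2 + ζm = ζm - Real.pi * I / 2 := by ring
    have e3 : ζm - (η / 2 - Real.pi * I / 2) + η / 2 = ζm + Real.pi * I / 2 := by ring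
    simp only [Kminus, Kmat, e1, e2, e3]
    ext i j
    fin_cases i <;> fin_cases j <;>
      simp [sinh_add_I, sinh_sub_I, sinh_mul_I] <;> ring
  rw [Tmat_eq, hK, Tgen_inner (c := fun k => -(cosh (η - ξ k) * cosh (η + ξ k)))]
  · congr 1
    rw [prod_cosh]
    simp only [Kplus, Kmat, Matrix.trace_fin_two, Matrix.mul_apply, Fin.sum_univ_two]
    rw [show η / 2 - Real.pi * I / 2 + η - η / 2 + ζp = (ζp + η) - Real.pi * I / 2 by ring,
      show ζp - (η / 2 - Real.pi * I / 2 + η) + η / 2 = (ζp - η) + Real.pi * I / 2 by ring,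
      sinh_add_I, sinh_sub_I, cosh_add, cosh_sub]
    simp
    field_simp
    rw [I_sq]
    ring
  · intro k
    rw [Rmat_eq, Rmat_eq,
      show η / 2 - Real.pi * I / 2 - ξ k - η / 2 = -ξ k - Real.pi * I / 2 by ring,
      show η / 2 - Real.pi * I / 2 + ξ k - η / 2 = ξ k - Real.pi * I / 2 by ring,
      show -ξ k - Real.pi * I / 2 + η = (η - ξ k) - Real.pi * I / 2 by ring,
      show ξ k - Real.pi * I / 2 + η = (η + ξ k) - Real.pi * I / 2 by ring]
    simp only [sinh_sub_I, cosh_neg]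
    apply inner_diag (by norm_num)
    · linear_combination (cosh (η - ξ k) * cosh (η + ξ k)) * I_mul_I
    · simp only [cosh_add, cosh_sub]
      linear_combination cosh (ξ k) ^ 2 * I_mul_I +
        sinh η ^ 2 * cosh_sq (ξ k) + cosh (ξ k) ^ 2 * cosh_sq η
    · ring

lemma T_neg_half_pi {N : ℕ} (η : ℂ) (ξ : Fin N → ℂ) (ζp ζm κp κm τp τm : ℂ)
    (hζp : sinh ζp ≠ 0) (hζm : sinh ζm ≠ 0) :
    Tmat N η ξ ζp ζm κp κm τp τm (-(η / 2 - Real.pi * I / 2)) =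
      (-2 * cosh η * (cosh ζm / sinh ζm) * (cosh ζp / sinh ζp) *
        aF N η ξ (Real.pi * I / 2 + η / 2) * dF N η ξ (Real.pi * I / 2 - η / 2)) •
        (1 : Matrix (Fin N → Fin 2) (Fin N → Fin 2) ℂ) := by
  have hK : Kplus η ζp κp τp (-(η / 2 - Real.pi * I / 2)) =
      (I * (cosh ζp / sinh ζp)) • !![1, 0; 0, -1] := by
    have e1 : 2 * (-(η / 2 - Real.pi * I / 2) + η) - η = Real.pi * I := by ring
    have e2 : -(η / 2 - Real.pi * I / 2) + η - η / 2 + ζp = ζp + Real.pi * I / 2 := by ring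
    have e3 : ζp - (-(η / 2 - Real.pi * I / 2) + η) + η / 2 = ζp - Real.pi * I / 2 := by ring
    simp only [Kplus, Kmat, e1, e2, e3]
    ext i j
    fin_cases i <;> fin_cases j <;>
      simp [sinh_add_I, sinh_sub_I, sinh_mul_I] <;> ring
  rw [Tmat_eq, hK, Tgen_outer (c := fun k => -(cosh (η - ξ k) * cosh (η + ξ k)))]
  · congr 1
    rw [prod_cosh]
    simp only [Kminus, Kmat, Matrix.trace_fin_two, Matrix.mul_apply, Fin.sum_univ_two]
    rw [show -(η / 2 - Real.pi * I / 2) - η / 2 + ζm = (ζm - η) + Real.pi * I / 2 by ring,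
      show ζm - -(η / 2 - Real.pi * I / 2) + η / 2 = (ζm + η) - Real.pi * I / 2 by ring,
      sinh_add_I, sinh_sub_I, cosh_add, cosh_sub]
    simp
    field_simp
    rw [I_sq]
    ring
  · intro k
    rw [Rmat_eq, Rmat_eq,
      show -(η / 2 - Real.pi * I / 2) - ξ k - η / 2 = -(η + ξ k) + Real.pi * I / 2 by ring,
      show -(η / 2 - Real.pi * I / 2) + ξ k - η / 2 = -(η - ξ k) + Real.pi * I / 2 by ring,
      show -(η + ξ k) + Real.pi * I / 2 + η = -ξ k + Real.pi * I / 2 by ring,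
      show -(η - ξ k) + Real.pi * I / 2 + η = ξ k + Real.pi * I / 2 by ring]
    simp only [sinh_add_I, cosh_neg]
    apply outer_diag (by norm_num)
    · linear_combination (cosh (η - ξ k) * cosh (η + ξ k)) * I_mul_I
    · simp only [cosh_add, cosh_sub]
      linear_combination cosh (ξ k) ^ 2 * I_mul_I +
        sinh η ^ 2 * cosh_sq (ξ k) + cosh (ξ k) ^ 2 * cosh_sq η
    · ring

/-! ### Asymptotics -/

lemma Tgen_smul {N : ℕ} (c : ℂ) (K K' : Matrix (Fin 2) (Fin 2) ℂ)
    (r r' : Fin N → Matrix (Fin 2 × Fin 2) (Fin 2 × Fin 2) ℂ) :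
    Tgen (c ^ 2 • K) (c ^ 2 • K') (fun k => c • r k) (fun k => c • r' k) =
      c ^ (2 * (N + 2)) • Tgen K K' r r' := by
  have h : ∀ (f : Fin N → Matrix (Fin 2 × Fin 2) (Fin 2 × Fin 2) ℂ) (L : List (Fin N)),
      (L.map fun k => emb k (c • f k)).prod =
        c ^ L.length • (L.map fun k => emb k (f k)).prod := by
    intro f L
    induction L with
    | nil => simp
    | cons k L ih =>
      rw [List.map_cons, List.prod_cons, ih, emb_smul, smul_mul_assoc, mul_smul_comm, smul_smul,
        List.map_cons, List.prod_cons, List.length_cons, pow_succ']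
  have hA : ∀ K : Matrix (Fin 2) (Fin 2) ℂ, auxOp N (c ^ 2 • K) = c ^ 2 • auxOp N K := by
    intro K
    apply blk_ext
    intro i j
    simp [blk_smul, blk_auxOp, smul_smul]
  have hl : (sites N).length = N := by simp [sites]
  simp only [Tgen, h, hA, smul_mul_assoc, mul_smul_comm, smul_smul, tr0_smul,
    List.length_reverse, hl]
  congr 1
  ring

lemma continuous_emb {N : ℕ} (n : Fin N) :
    Continuous (emb n : Matrix (Fin 2 × Fin 2) (Fin 2 × Fin 2) ℂ → _) := by
  apply continuous_matrix
  intro p q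
  exact (continuous_id.matrix_elem _ _).mul continuous_const

lemma continuous_auxOp {N : ℕ} : Continuous (auxOp N) := by
  apply continuous_matrix
  intro p q
  exact (continuous_id.matrix_elem _ _).mul continuous_const

lemma continuous_tr0 {N : ℕ} : Continuous (tr0 N) := by
  apply continuous_matrix
  intro p q
  exact continuous_finsetSum _ fun i _ => continuous_id.matrix_elem _ _

lemma tendsto_Tgen {N : ℕ} {ι : Type*} {l : Filter ι} {K K' : ι → Matrix (Fin 2) (Fin 2) ℂ}
    {r r' : ι → Fin N → Matrix (Fin 2 × Fin 2) (Fin 2 × Fin 2) ℂ}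
    {K₀ K₀' : Matrix (Fin 2) (Fin 2) ℂ}
    {r₀ r₀' : Fin N → Matrix (Fin 2 × Fin 2) (Fin 2 × Fin 2) ℂ}
    (hK : Filter.Tendsto K l (nhds K₀)) (hK' : Filter.Tendsto K' l (nhds K₀'))
    (hr : ∀ k, Filter.Tendsto (fun x => r x k) l (nhds (r₀ k)))
    (hr' : ∀ k, Filter.Tendsto (fun x => r' x k) l (nhds (r₀' k))) :
    Filter.Tendsto (fun x => Tgen (K x) (K' x) (r x) (r' x)) l (nhds (Tgen K₀ K₀' r₀ r₀')) := by
  have hp : ∀ (L : List (Fin N)) {f : ι → Fin N → Matrix (Fin 2 × Fin 2) (Fin 2 × Fin 2) ℂ}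
      {f₀ : Fin N → Matrix (Fin 2 × Fin 2) (Fin 2 × Fin 2) ℂ},
      (∀ k, Filter.Tendsto (fun x => f x k) l (nhds (f₀ k))) →
      Filter.Tendsto (fun x => (L.map fun k => emb k (f x k)).prod) l
        (nhds (L.map fun k => emb k (f₀ k)).prod) := by
    intro L f f₀ hf
    exact tendsto_list_prod L fun k _ => ((continuous_emb k).tendsto _).comp (hf k)
  exact (continuous_tr0.tendsto _).comp
    (((((continuous_auxOp.tendsto _).comp hK).mul (hp _ hr)).mul
      ((continuous_auxOp.tendsto _).comp hK')).mul (hp _ hr'))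

lemma tendsto_exp_neg : Filter.Tendsto (fun x : ℝ => exp (-(x : ℂ))) Filter.atTop (nhds 0) := by
  rw [Complex.tendsto_exp_nhds_zero_iff]
  simpa using Filter.tendsto_neg_atTop_atBot

/-- The sign `ε = ±1` selects the direction in which the argument goes to infinity. -/
lemma tendsto_sinh {ε : ℂ} (hε : ε = 1 ∨ ε = -1) (c : ℂ) :
    Filter.Tendsto (fun x : ℝ => exp (-(x : ℂ)) * sinh (ε * x + c)) Filter.atTop
      (nhds (ε * exp (ε * c) / 2)) := by
  have h : Filter.Tendsto
      (fun x : ℝ => ε * (exp (ε * c) - exp (-(x : ℂ)) * exp (-(x : ℂ)) * exp (-(ε * c))) / 2)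
      Filter.atTop (nhds (ε * (exp (ε * c) - 0 * 0 * exp (-(ε * c))) / 2)) :=
    (((tendsto_const_nhds.sub
      ((tendsto_exp_neg.mul tendsto_exp_neg).mul_const _)).const_mul _).div_const _)
  simp only [mul_zero, zero_mul, sub_zero] at h
  refine h.congr fun x => ?_
  have hx : exp (-(x : ℂ)) * exp (x : ℂ) = 1 := by rw [← exp_add]; simp
  rcases hε with rfl | rfl
  · simp only [one_mul, Complex.sinh, neg_add, exp_add]
    linear_combination (-exp c / 2) * hx
  · simp only [neg_mul, one_mul, neg_neg, Complex.sinh, neg_add, exp_add]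
    linear_combination (exp (-c) / 2) * hx

lemma tendsto_sinh_zero {ε : ℂ} (hε : ε = 1 ∨ ε = -1) (c : ℂ) :
    Filter.Tendsto (fun x : ℝ => exp (-(x : ℂ)) ^ 2 * sinh (ε * x + c)) Filter.atTop
      (nhds 0) := by
  have h := tendsto_exp_neg.mul (tendsto_sinh hε c)
  rw [zero_mul] at h
  refine h.congr fun x => ?_
  ring

lemma tendsto_sinh_two {ε : ℂ} (hε : ε = 1 ∨ ε = -1) (c : ℂ) :
    Filter.Tendsto (fun x : ℝ => exp (-(x : ℂ)) ^ 2 * sinh (2 * (ε * x) + c)) Filter.atTop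
      (nhds (ε * exp (ε * c) / 2)) := by
  have h := (tendsto_sinh hε c).comp
    (Filter.tendsto_id.const_mul_atTop (show (0 : ℝ) < 2 by norm_num))
  refine h.congr fun x => ?_
  simp only [Function.comp_apply, id, ofReal_mul, ofReal_ofNat]
  rw [← exp_nat_mul]
  congr 2
  · push_cast
    ring
  · ring

/-- Only the off-diagonal part of the boundary matrix survives in the limit. -/
lemma tendsto_Kmat {ε : ℂ} (hε : ε = 1 ∨ ε = -1) (η c ζ κ τ : ℂ) :
    Filter.Tendsto (fun x : ℝ => exp (-(x : ℂ)) ^ 2 • Kmat η (ε * x + c) ζ κ τ) Filter.atTop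
      (nhds !![0, κ * exp τ * (ε * exp (ε * (2 * c - η)) / 2) / sinh ζ;
        κ * exp (-τ) * (ε * exp (ε * (2 * c - η)) / 2) / sinh ζ, 0]) := by
  have hε' : -ε = 1 ∨ -ε = -1 := by
    rcases hε with rfl | rfl <;> simp
  refine tendsto_pi_nhds.2 fun i => tendsto_pi_nhds.2 ?_
  intro j
  have h2 := tendsto_sinh_two hε (2 * c - η)
  fin_cases i <;> fin_cases j
  · have h := (tendsto_sinh_zero hε (c - η / 2 + ζ)).div_const (sinh ζ)
    rw [zero_div] at h
    refine h.congr fun x => ?_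
    simp only [Kmat, Matrix.smul_apply, smul_eq_mul]
    simp
    ring_nf
  · refine ((h2.const_mul (κ * exp τ)).div_const (sinh ζ)).congr fun x => ?_
    simp [Kmat]
    ring_nf
  · refine ((h2.const_mul (κ * exp (-τ))).div_const (sinh ζ)).congr fun x => ?_
    simp [Kmat]
    ring_nf
  · have h := (tendsto_sinh_zero hε' (ζ - c + η / 2)).div_const (sinh ζ)
    rw [zero_div] at h
    refine h.congr fun x => ?_
    simp [Kmat]
    ring_nf

lemma tendsto_Rmat {ε : ℂ} (hε : ε = 1 ∨ ε = -1) (η c : ℂ) :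
    Filter.Tendsto (fun x : ℝ => exp (-(x : ℂ)) • Rmat η (ε * x + c)) Filter.atTop
      (nhds (R6 (ε * exp (ε * (c + η)) / 2) (ε * exp (ε * c) / 2) 0)) := by
  refine tendsto_pi_nhds.2 fun p => tendsto_pi_nhds.2 ?_
  intro q
  have h0 : Filter.Tendsto (fun x : ℝ => exp (-(x : ℂ)) * sinh η) Filter.atTop (nhds 0) := by
    simpa using tendsto_exp_neg.mul_const (sinh η)
  simp only [Matrix.smul_apply, smul_eq_mul, Rmat, R6]
  split_ifs
  · simpa only [add_assoc] using tendsto_sinh hε (c + η)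
  · exact tendsto_sinh hε c
  · exact h0
  · simp

/-- The `2 (N + 2)` factors `e^{-x}` are distributed over the two boundary matrices (two each)
and the `2 N` local `R`-matrices (one each). -/
lemma Tmat_scaled {N : ℕ} (η : ℂ) (ξ : Fin N → ℂ) (ζp ζm κp κm τp τm ε : ℂ) (x : ℝ) :
    exp (-(2 * (x : ℂ) * ((N : ℂ) + 2))) • Tmat N η ξ ζp ζm κp κm τp τm (ε * x) =
      Tgen (exp (-(x : ℂ)) ^ 2 • Kmat η (ε * x + η) ζp κp τp)
        (exp (-(x : ℂ)) ^ 2 • Kmat η (ε * x + 0) ζm κm τm)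
        (fun k => exp (-(x : ℂ)) • Rmat η (ε * x + (-ξ k - η / 2)))
        (fun k => exp (-(x : ℂ)) • Rmat η (ε * x + (ξ k - η / 2))) := by
  have h1 : exp (-(2 * (x : ℂ) * ((N : ℂ) + 2))) = exp (-(x : ℂ)) ^ (2 * (N + 2)) := by
    rw [← exp_nat_mul]
    push_cast
    ring_nf
  rw [Tgen_smul, Tmat_eq, h1]
  simp only [Kplus, Kminus, add_zero, sub_eq_add_neg, add_assoc]

lemma tendsto_Tmat {ε : ℂ} (hε : ε = 1 ∨ ε = -1) {N : ℕ} (η : ℂ) (ξ : Fin N → ℂ)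
    (ζp ζm κp κm τp τm : ℂ) (hζp : sinh ζp ≠ 0) (hζm : sinh ζm ≠ 0) :
    Filter.Tendsto
      (fun x : ℝ => exp (-(2 * (x : ℂ) * ((N : ℂ) + 2))) •
        Tmat N η ξ ζp ζm κp κm τp τm (ε * x))
      Filter.atTop
      (nhds (((2 : ℂ) ^ (-(2 * (N : ℤ) + 1)) * (κp * κm * cosh (τp - τm) /
          (sinh ζp * sinh ζm))) •
        (1 : Matrix (Fin N → Fin 2) (Fin N → Fin 2) ℂ))) := by
  have hεε : ε * ε = 1 := by rcases hε with rfl | rfl <;> norm_num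
  have h := tendsto_Tgen (N := N) (tendsto_Kmat hε η η ζp κp τp)
    (tendsto_Kmat hε η 0 ζm κm τm)
    (r := fun (x : ℝ) k => exp (-(x : ℂ)) • Rmat η (ε * x + (-ξ k - η / 2)))
    (r' := fun (x : ℝ) k => exp (-(x : ℂ)) • Rmat η (ε * x + (ξ k - η / 2)))
    (fun k => tendsto_Rmat hε η (-ξ k - η / 2))
    (fun k => tendsto_Rmat hε η (ξ k - η / 2))
  -- the weight of each site in the limit is `1/4`: all dependence on `ξ` and `η` cancels
  rw [Tgen_inner (c := fun _ => 1 / 4)] at h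
  · have hval : (∏ _k : Fin N, (1 / 4 : ℂ)) *
        (!![0, κp * exp τp * (ε * exp (ε * (2 * η - η)) / 2) / sinh ζp;
            κp * exp (-τp) * (ε * exp (ε * (2 * η - η)) / 2) / sinh ζp, 0] *
          !![0, κm * exp τm * (ε * exp (ε * (2 * 0 - η)) / 2) / sinh ζm;
            κm * exp (-τm) * (ε * exp (ε * (2 * 0 - η)) / 2) / sinh ζm, 0]).trace =
        (2 : ℂ) ^ (-(2 * (N : ℤ) + 1)) * (κp * κm * cosh (τp - τm) /
          (sinh ζp * sinh ζm)) := by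
      have e1 : exp (ε * (2 * η - η)) * exp (ε * (2 * 0 - η)) = 1 := by
        rw [← exp_add, ← exp_zero]
        congr 1
        ring
      have e2 : (2 : ℂ) ^ (-(2 * (N : ℤ) + 1)) = (1 / 4) ^ N * (1 / 2) := by
        rw [zpow_neg, zpow_add₀ two_ne_zero, zpow_mul]
        norm_num
        rw [one_div_pow]
        ring
      rw [e2, Matrix.trace_fin_two, Complex.cosh, neg_sub, sub_eq_add_neg τp,
        sub_eq_add_neg τm, exp_add, exp_add, Finset.prod_const, Finset.card_univ, Fintype.card_fin]
      clear h
      generalize exp (ε * (2 * η - η)) = u at *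
      generalize exp (ε * (2 * 0 - η)) = v at *
      simp only [Matrix.mul_apply, Fin.sum_univ_two, Matrix.of_apply, Matrix.cons_val_zero,
        Matrix.cons_val_one, mul_zero, zero_add, add_zero]
      field_simp
      linear_combination
        (exp τp * exp (-τm) + exp (-τp) * exp τm) * κp * κm * (ε * ε * e1 + hεε)
    rw [hval] at h
    refine h.congr fun x => ?_
    exact (Tmat_scaled η ξ ζp ζm κp κm τp τm ε x).symm
  · intro k
    apply inner_offdiag
    · have : exp (ε * (-ξ k - η / 2 + η)) * exp (ε * (ξ k - η / 2)) = 1 := by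
        rw [← exp_add, ← exp_zero]
        congr 1
        ring
      linear_combination (ε * ε / 4) * this + 1 / 4 * hεε
    · have : exp (ε * (-ξ k - η / 2)) * exp (ε * (ξ k - η / 2 + η)) = 1 := by
        rw [← exp_add, ← exp_zero]
        congr 1
        ring
      linear_combination (ε * ε / 4) * this + 1 / 4 * hεε

/-- part of Proposition 2.1: central values and scalar asymptotics of the
transfer matrix. -/
theorem statement13
    (N : ℕ) (hN : 1 ≤ N) (η : ℂ) (ξ : Fin N → ℂ)
    (ζp ζm κp κm τp τm : ℂ)
    (hζp : Complex.sinh ζp ≠ 0) (hζm : Complex.sinh ζm ≠ 0) :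
    (Tmat N η ξ ζp ζm κp κm τp τm (η / 2) =
        ((-1 : ℂ) ^ N * 2 * Complex.cosh η * aF N η ξ (η / 2) * dF N η ξ (-(η / 2))) •
          (1 : Matrix (Fin N → Fin 2) (Fin N → Fin 2) ℂ) ∧
      Tmat N η ξ ζp ζm κp κm τp τm (-(η / 2)) =
        ((-1 : ℂ) ^ N * 2 * Complex.cosh η * aF N η ξ (η / 2) * dF N η ξ (-(η / 2))) •
          (1 : Matrix (Fin N → Fin 2) (Fin N → Fin 2) ℂ)) ∧
    (Tmat N η ξ ζp ζm κp κm τp τm (η / 2 - Real.pi * Complex.I / 2) =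
        (-2 * Complex.cosh η * (Complex.cosh ζm / Complex.sinh ζm) *
            (Complex.cosh ζp / Complex.sinh ζp) *
            aF N η ξ (Real.pi * Complex.I / 2 + η / 2) *
            dF N η ξ (Real.pi * Complex.I / 2 - η / 2)) •
          (1 : Matrix (Fin N → Fin 2) (Fin N → Fin 2) ℂ) ∧
      Tmat N η ξ ζp ζm κp κm τp τm (-(η / 2 - Real.pi * Complex.I / 2)) =
        (-2 * Complex.cosh η * (Complex.cosh ζm / Complex.sinh ζm) *
            (Complex.cosh ζp / Complex.sinh ζp) *
            aF N η ξ (Real.pi * Complex.I / 2 + η / 2) *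
            dF N η ξ (Real.pi * Complex.I / 2 - η / 2)) •
          (1 : Matrix (Fin N → Fin 2) (Fin N → Fin 2) ℂ)) ∧
    (Filter.Tendsto
        (fun x : ℝ => Complex.exp (-(2 * (x : ℂ) * ((N : ℂ) + 2))) •
          Tmat N η ξ ζp ζm κp κm τp τm (x : ℂ))
        Filter.atTop
        (nhds (((2 : ℂ) ^ (-(2 * (N : ℤ) + 1)) * (κp * κm * Complex.cosh (τp - τm) /
            (Complex.sinh ζp * Complex.sinh ζm))) •
          (1 : Matrix (Fin N → Fin 2) (Fin N → Fin 2) ℂ))) ∧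
      Filter.Tendsto
        (fun x : ℝ => Complex.exp (2 * (x : ℂ) * ((N : ℂ) + 2)) •
          Tmat N η ξ ζp ζm κp κm τp τm (x : ℂ))
        Filter.atBot
        (nhds (((2 : ℂ) ^ (-(2 * (N : ℤ) + 1)) * (κp * κm * Complex.cosh (τp - τm) /
            (Complex.sinh ζp * Complex.sinh ζm))) •
          (1 : Matrix (Fin N → Fin 2) (Fin N → Fin 2) ℂ)))) := by
  refine ⟨⟨T_half η ξ ζp ζm κp κm τp τm hζp hζm, T_neg_half η ξ ζp ζm κp κm τp τm hζp hζm⟩,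
    ⟨T_half_pi η ξ ζp ζm κp κm τp τm hζp hζm, T_neg_half_pi η ξ ζp ζm κp κm τp τm hζp hζm⟩,
    ?_, ?_⟩
  · simpa only [one_mul] using tendsto_Tmat (Or.inl rfl) η ξ ζp ζm κp κm τp τm hζp hζm
  · have h := (tendsto_Tmat (Or.inr rfl) η ξ ζp ζm κp κm τp τm hζp hζm).comp
      Filter.tendsto_neg_atBot_atTop
    refine h.congr fun x => ?_
    simp only [Function.comp_apply, ofReal_neg, neg_mul, one_mul, neg_neg, mul_neg]

end XXZ
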